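/- arXiv:1110.6187 — 5 statements merged into one kernel-verified Lean document; each statement's English description precedes it below -/
import Mathlib

section
/- Let E be a real Banach space, let {X_n}, {Y_n} be sequences of nonempty bounded subsets of E and X, Y nonempty bounded subsets of E such that X_n →F X and Y_n →F Y (Fisher convergence). Let {λ_n}, {μ_n} ⊂ [0,∞) with λ_n → λ and μ_n → μ for some λ, μ ≥ 0. Then the sequence of closures of λ_n X_n + μ_n Y_n Fisher-converges to the closure of λX + μY, where A + B denotes the Minkowski sum {a+b : a∈A, b∈B} and λA = {λa : a∈A}. -/
/-!
Fisher convergence is preserved separately by scaling, by Minkowski addition and by closure.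
Addition is subadditivity of the distance to a set. For scaling, moving from `c • x` to `d • x`
costs `‖c - d‖ * ‖x‖`, and `‖x‖` is controlled on `X n` by `excess (X n) A` plus a norm bound
on `A`, so no uniform bound on the sets `X n` has to be extracted beforehand.
-/

open Metric Filter Topology Pointwise

variable {E : Type*} [NormedAddCommGroup E] [NormedSpace ℝ E] [CompleteSpace E]

/-- The excess `e(A,B) = sup_{a ∈ A} d(a, B)`. -/
noncomputable def excess (A B : Set E) : ℝ := sSup ((fun a => infDist a B) '' A)

/-- Fisher convergence: `e(Xₙ, L) → 0` and `d(z, Xₙ) → 0` for every `z ∈ L`. -/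
def FisherConv (X : ℕ → Set E) (L : Set E) : Prop :=
  Tendsto (fun n => excess (X n) L) atTop (𝓝 0) ∧
    ∀ z ∈ L, Tendsto (fun n => infDist z (X n)) atTop (𝓝 0)

open Bornology Set
open scoped NNReal

section InfDist

theorem infDist_image_le {α β : Type*} [PseudoMetricSpace α] [PseudoMetricSpace β] {K : ℝ≥0}
    {f : α → β} (hf : LipschitzWith K f) (x : α) {s : Set α} (hs : s.Nonempty) :
    infDist (f x) (f '' s) ≤ K * infDist x s := by
  have := hs.to_subtype
  rw [infDist_eq_iInf (s := s), Real.mul_iInf_of_nonneg K.coe_nonneg]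
  exact le_ciInf fun y =>
    (infDist_le_dist_of_mem (mem_image_of_mem f y.2)).trans (hf.dist_le_mul x y)

variable {F : Type*} [SeminormedAddCommGroup F] {s t : Set F}

theorem infDist_add_le (hs : s.Nonempty) (ht : t.Nonempty) (x y : F) :
    infDist (x + y) (s + t) ≤ infDist x s + infDist y t := by
  have := hs.to_subtype
  have := ht.to_subtype
  rw [infDist_eq_iInf (s := s), infDist_eq_iInf (s := t)]
  exact le_ciInf_add_ciInf fun a b =>
    (infDist_le_dist_of_mem (add_mem_add a.2 b.2)).trans (dist_add_add_le x y a b)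

theorem norm_le_infDist_add {R : ℝ} (hs : s.Nonempty) (hR : ∀ a ∈ s, ‖a‖ ≤ R) (x : F) :
    ‖x‖ ≤ infDist x s + R := by
  rw [← sub_le_iff_le_add, le_infDist hs]
  intro a ha
  linarith [hR a ha, norm_le_norm_add_norm_sub' x a, dist_eq_norm x a]

theorem infDist_smul_le {𝕜 : Type*} [SeminormedRing 𝕜] [Module 𝕜 F] [IsBoundedSMul 𝕜 F]
    (hs : s.Nonempty) (c d : 𝕜) (x : F) :
    infDist (c • x) (d • s) ≤ ‖d‖ * infDist x s + ‖c - d‖ * ‖x‖ :=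
  calc infDist (c • x) (d • s)
      ≤ infDist (d • x) (d • s) + dist (c • x) (d • x) := infDist_le_infDist_add_dist
    _ ≤ ‖d‖ * infDist x s + ‖c - d‖ * ‖x‖ := by
        refine add_le_add (infDist_image_le (lipschitzWith_smul d) x hs) ?_
        rw [dist_eq_norm, ← sub_smul]
        exact norm_smul_le _ _

end InfDist

section Excess

variable {F : Type*} [NormedAddCommGroup F] {S T A B : Set F}

theorem excess_nonneg (S A : Set F) : 0 ≤ excess S A :=
  Real.sSup_nonneg (forall_mem_image.2 fun _ _ => infDist_nonneg)

theorem excess_le {r : ℝ} (hr : 0 ≤ r) (h : ∀ x ∈ S, infDist x A ≤ r) : excess S A ≤ r :=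
  Real.sSup_le (forall_mem_image.2 h) hr

theorem infDist_le_excess (hS : IsBounded S) (A : Set F) {x : F} (hx : x ∈ S) :
    infDist x A ≤ excess S A :=
  le_csSup ((lipschitz_infDist_pt A).isBounded_image hS).bddAbove (mem_image_of_mem _ hx)

theorem excess_closure_right (S A : Set F) : excess S (closure A) = excess S A := by
  simp only [excess, infDist_closure]

theorem excess_closure_left_le (hS : IsBounded S) (A : Set F) :
    excess (closure S) A ≤ excess S A :=
  excess_le (excess_nonneg S A) <| closure_minimal (fun _ => infDist_le_excess hS A) <|
    isClosed_le (continuous_infDist_pt A) continuous_const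

theorem excess_add_le (hS : IsBounded S) (hT : IsBounded T) (hA : A.Nonempty) (hB : B.Nonempty) :
    excess (S + T) (A + B) ≤ excess S A + excess T B := by
  refine excess_le (add_nonneg (excess_nonneg S A) (excess_nonneg T B)) ?_
  rintro _ ⟨x, hx, y, hy, rfl⟩
  exact (infDist_add_le hA hB x y).trans
    (add_le_add (infDist_le_excess hS A hx) (infDist_le_excess hT B hy))

theorem excess_smul_le {𝕜 : Type*} [SeminormedRing 𝕜] [Module 𝕜 F] [IsBoundedSMul 𝕜 F] {R : ℝ}
    (hS : IsBounded S) (hA : A.Nonempty) (hR : ∀ a ∈ A, ‖a‖ ≤ R) (c d : 𝕜) :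
    excess (c • S) (d • A) ≤ ‖d‖ * excess S A + ‖c - d‖ * (excess S A + R) := by
  have hR0 : 0 ≤ R := hA.elim fun a ha => (norm_nonneg a).trans (hR a ha)
  have he : 0 ≤ excess S A := excess_nonneg S A
  refine excess_le (by positivity) (forall_mem_image.2 fun x hx => ?_)
  have hxA : infDist x A ≤ excess S A := infDist_le_excess hS A hx
  calc infDist (c • x) (d • A)
      ≤ ‖d‖ * infDist x A + ‖c - d‖ * ‖x‖ := infDist_smul_le hA c d x
    _ ≤ ‖d‖ * infDist x A + ‖c - d‖ * (infDist x A + R) := by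
        gcongr
        exact norm_le_infDist_add hA hR x
    _ ≤ ‖d‖ * excess S A + ‖c - d‖ * (excess S A + R) := by gcongr

end Excess

namespace FisherConv

variable {F : Type*} [NormedAddCommGroup F] {X Y : ℕ → Set F} {A B : Set F}

protected theorem closure (hX : ∀ n, IsBounded (X n)) (h : FisherConv X A) :
    FisherConv (fun n => closure (X n)) (closure A) := by
  refine ⟨squeeze_zero (fun n => excess_nonneg _ _) (fun n => ?_) h.1, fun z hz => ?_⟩
  · rw [excess_closure_right]
    exact excess_closure_left_le (hX n) A
  · simp only [infDist_closure]
    -- The functions `infDist · (X n)` are all 1-Lipschitz, so convergence passes to the closure.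
    have hequi : UniformEquicontinuous fun n x => infDist x (X n) :=
      LipschitzWith.uniformEquicontinuous _ 1 fun n => lipschitz_infDist_pt (X n)
    exact (hequi.equicontinuous z).tendsto_of_mem_closure tendsto_const_nhds h.2 hz

protected theorem add (hXne : ∀ n, (X n).Nonempty) (hXbd : ∀ n, IsBounded (X n))
    (hYne : ∀ n, (Y n).Nonempty) (hYbd : ∀ n, IsBounded (Y n)) (hA : A.Nonempty) (hB : B.Nonempty)
    (hXA : FisherConv X A) (hYB : FisherConv Y B) :
    FisherConv (fun n => X n + Y n) (A + B) := by
  constructor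
  · refine squeeze_zero (fun n => excess_nonneg _ _)
      (fun n => excess_add_le (hXbd n) (hYbd n) hA hB) ?_
    simpa only [add_zero] using hXA.1.add hYB.1
  · rintro _ ⟨a, ha, b, hb, rfl⟩
    refine squeeze_zero (fun n => infDist_nonneg)
      (fun n => infDist_add_le (hXne n) (hYne n) a b) ?_
    simpa only [add_zero] using (hXA.2 a ha).add (hYB.2 b hb)

variable {𝕜 : Type*} [SeminormedRing 𝕜] [Module 𝕜 F] [IsBoundedSMul 𝕜 F]

protected theorem smul (hXne : ∀ n, (X n).Nonempty) (hXbd : ∀ n, IsBounded (X n))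
    (hAne : A.Nonempty) (hAbd : IsBounded A) (h : FisherConv X A) {c : ℕ → 𝕜} {d : 𝕜}
    (hc : Tendsto c atTop (𝓝 d)) :
    FisherConv (fun n => c n • X n) (d • A) := by
  constructor
  · obtain ⟨R, hR⟩ := hAbd.exists_norm_le
    refine squeeze_zero (fun n => excess_nonneg _ _)
      (fun n => excess_smul_le (hXbd n) hAne hR (c n) d) ?_
    simpa only [sub_self, norm_zero, mul_zero, zero_mul, add_zero] using
      (h.1.const_mul ‖d‖).add ((hc.sub_const d).norm.mul (h.1.add_const R))
  · rintro _ ⟨a, ha, rfl⟩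
    refine squeeze_zero (fun n => infDist_nonneg)
      (fun n => infDist_smul_le (hXne n) d (c n) a) ?_
    simpa only [sub_self, norm_zero, mul_zero, zero_mul, add_zero] using
      (hc.norm.mul (h.2 a ha)).add ((hc.const_sub d).norm.mul_const ‖a‖)

end FisherConv

theorem fisherConv_smul_add_general {𝕜 F : Type*} [SeminormedRing 𝕜] [NormedAddCommGroup F]
    [Module 𝕜 F] [IsBoundedSMul 𝕜 F] {X Y : ℕ → Set F} {A B : Set F}
    (hXne : ∀ n, (X n).Nonempty) (hXbd : ∀ n, IsBounded (X n))
    (hYne : ∀ n, (Y n).Nonempty) (hYbd : ∀ n, IsBounded (Y n))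
    (hAne : A.Nonempty) (hAbd : IsBounded A) (hBne : B.Nonempty) (hBbd : IsBounded B)
    (hXA : FisherConv X A) (hYB : FisherConv Y B) {lam mu : ℕ → 𝕜} {l m : 𝕜}
    (hlam : Tendsto lam atTop (𝓝 l)) (hmu : Tendsto mu atTop (𝓝 m)) :
    FisherConv (fun n => closure (lam n • X n + mu n • Y n)) (closure (l • A + m • B)) := by
  have hXbd' (n : ℕ) : IsBounded (lam n • X n) :=
    (lipschitzWith_smul (lam n)).isBounded_image (hXbd n)
  have hYbd' (n : ℕ) : IsBounded (mu n • Y n) :=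
    (lipschitzWith_smul (mu n)).isBounded_image (hYbd n)
  have hlX : FisherConv (fun n => lam n • X n) (l • A) := hXA.smul hXne hXbd hAne hAbd hlam
  have hmY : FisherConv (fun n => mu n • Y n) (m • B) := hYB.smul hYne hYbd hBne hBbd hmu
  have hsum : FisherConv (fun n => lam n • X n + mu n • Y n) (l • A + m • B) :=
    hlX.add (fun n => (hXne n).smul_set) hXbd' (fun n => (hYne n).smul_set) hYbd'
      hAne.smul_set hBne.smul_set hmY
  exact hsum.closure fun n => (hXbd' n).add (hYbd' n)

/-- Proposition 3.3: if `Xₙ →F A`, `Yₙ →F B` (Fisher) for nonempty bounded sets, and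
`λₙ → λ`, `μₙ → μ` with all scalars nonnegative, then the closures of `λₙXₙ + μₙYₙ`
Fisher-converge to the closure of `λA + μB`. -/
theorem fisherConv_smul_add (X Y : ℕ → Set E) (A B : Set E)
    (hXne : ∀ n, (X n).Nonempty) (hXbd : ∀ n, Bornology.IsBounded (X n))
    (hYne : ∀ n, (Y n).Nonempty) (hYbd : ∀ n, Bornology.IsBounded (Y n))
    (hAne : A.Nonempty) (hAbd : Bornology.IsBounded A)
    (hBne : B.Nonempty) (hBbd : Bornology.IsBounded B)
    (hXF : FisherConv X A) (hYF : FisherConv Y B)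
    (lam mu : ℕ → ℝ) (l m : ℝ)
    (hlam0 : ∀ n, 0 ≤ lam n) (hmu0 : ∀ n, 0 ≤ mu n) (hl0 : 0 ≤ l) (hm0 : 0 ≤ m)
    (hlaml : Tendsto lam atTop (𝓝 l)) (hmum : Tendsto mu atTop (𝓝 m)) :
    FisherConv (fun n => closure (lam n • X n + mu n • Y n)) (closure (l • A + m • B)) :=
  fisherConv_smul_add_general hXne hXbd hYne hYbd hAne hAbd hBne hBbd hXF hYF hlaml hmum
end

section
/- Let E be a real Banach space, let {X_n}, {Y_n} be sequences in ℭ(E) and X, Y ∈ ℭ(E). Suppose X_n →W X and Y_n →W Y (Wijsman convergence), and h(X_n, Y_n) < r for every n ∈ ℕ, where r > 0. Then h(X, Y) ≤ r. -/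
open Metric Filter Topology

variable {E : Type*} [NormedAddCommGroup E] [NormedSpace ℝ E] [CompleteSpace E]

/-- The Pompeiu–Hausdorff distance `h(A,B) = max (e(A,B)) (e(B,A))`. -/
noncomputable def hdist (A B : Set E) : ℝ := max (excess A B) (excess B A)

/-- Wijsman convergence: `d(z, Xₙ) → d(z, L)` for every `z`. -/
def WijsmanConv (X : ℕ → Set E) (L : Set E) : Prop :=
  ∀ z : E, Tendsto (fun n => infDist z (X n)) atTop (𝓝 (infDist z L))

section HausdorffWijsman

variable {F : Type*} [NormedAddCommGroup F] {X Y : ℕ → Set F} {A B : Set F} {r : ℝ}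

theorem infDist_le_excess_s3 {a : F} (hA : Bornology.IsBounded A) (ha : a ∈ A) :
    infDist a B ≤ excess A B :=
  le_csSup ((lipschitz_infDist_pt B).isBounded_image hA).bddAbove (Set.mem_image_of_mem _ ha)

theorem excess_le_of_forall_infDist_le (hA : A.Nonempty) (h : ∀ a ∈ A, infDist a B ≤ r) :
    excess A B ≤ r :=
  csSup_le (hA.image _) (Set.forall_mem_image.2 h)

-- The two sets are compared only through their distances to a fixed point `z`, which is exactly
-- what Wijsman convergence controls.
theorem infDist_le_infDist_add_excess (hAne : A.Nonempty) (hAbd : Bornology.IsBounded A) (z : F) :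
    infDist z B ≤ infDist z A + excess A B := by
  rw [← sub_le_iff_le_add, le_infDist hAne]
  intro a ha
  rw [sub_le_iff_le_add']
  calc
    infDist z B ≤ infDist a B + dist z a := infDist_le_infDist_add_dist
    _ ≤ excess A B + dist z a := by gcongr; exact infDist_le_excess_s3 hAbd ha

theorem WijsmanConv.infDist_le_infDist_add (hX : WijsmanConv X A) (hY : WijsmanConv Y B)
    (hXne : ∀ n, (X n).Nonempty) (hXbd : ∀ n, Bornology.IsBounded (X n))
    (hXY : ∃ᶠ n in atTop, excess (X n) (Y n) ≤ r) (z : F) :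
    infDist z B ≤ infDist z A + r := by
  refine le_of_tendsto_of_tendsto_of_frequently (hY z) ((hX z).add_const r) (hXY.mono ?_)
  intro n hn
  calc
    infDist z (Y n) ≤ infDist z (X n) + excess (X n) (Y n) :=
      infDist_le_infDist_add_excess (hXne n) (hXbd n) z
    _ ≤ infDist z (X n) + r := by gcongr

theorem WijsmanConv.excess_le (hX : WijsmanConv X A) (hY : WijsmanConv Y B)
    (hXne : ∀ n, (X n).Nonempty) (hXbd : ∀ n, Bornology.IsBounded (X n)) (hA : A.Nonempty)
    (hXY : ∃ᶠ n in atTop, excess (X n) (Y n) ≤ r) : excess A B ≤ r := by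
  refine excess_le_of_forall_infDist_le hA fun a ha => ?_
  simpa only [infDist_zero_of_mem ha, zero_add] using
    hX.infDist_le_infDist_add hY hXne hXbd hXY a

theorem hdist_le_of_wijsmanConv_general
    (hXne : ∀ n, (X n).Nonempty) (hXbd : ∀ n, Bornology.IsBounded (X n))
    (hYne : ∀ n, (Y n).Nonempty) (hYbd : ∀ n, Bornology.IsBounded (Y n))
    (hA : A.Nonempty) (hB : B.Nonempty) (hX : WijsmanConv X A) (hY : WijsmanConv Y B)
    (hXY : ∃ᶠ n in atTop, hdist (X n) (Y n) ≤ r) : hdist A B ≤ r :=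
  max_le
    (hX.excess_le hY hXne hXbd hA (hXY.mono fun _ h => (le_max_left _ _).trans h))
    (hY.excess_le hX hYne hYbd hB (hXY.mono fun _ h => (le_max_right _ _).trans h))

end HausdorffWijsman

/-- Proposition 3.4: if `Xₙ →W A`, `Yₙ →W B` (Wijsman) with all sets nonempty closed
bounded, and `h(Xₙ, Yₙ) < r` for every `n`, then `h(A, B) ≤ r`. -/
theorem hdist_le_of_wijsmanConv (X Y : ℕ → Set E) (A B : Set E)
    (hXne : ∀ n, (X n).Nonempty) (hXcl : ∀ n, IsClosed (X n))
    (hXbd : ∀ n, Bornology.IsBounded (X n))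
    (hYne : ∀ n, (Y n).Nonempty) (hYcl : ∀ n, IsClosed (Y n))
    (hYbd : ∀ n, Bornology.IsBounded (Y n))
    (hAne : A.Nonempty) (hAcl : IsClosed A) (hAbd : Bornology.IsBounded A)
    (hBne : B.Nonempty) (hBcl : IsClosed B) (hBbd : Bornology.IsBounded B)
    (hXW : WijsmanConv X A) (hYW : WijsmanConv Y B)
    (r : ℝ) (hr : 0 < r) (hXY : ∀ n, hdist (X n) (Y n) < r) :
    hdist A B ≤ r :=
  hdist_le_of_wijsmanConv_general hXne hXbd hYne hYbd hAne hBne hXW hYW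
    (Frequently.of_forall fun n => (hXY n).le)
end

section
/- Let E be a real Banach space and C ∈ ℭ(E). For n ∈ ℕ let C[n] = (C + C + … + C)/n denote the n-fold Minkowski sum of C with itself, scaled by 1/n. Then the closures of C[n] converge in the sense of Fisher to the closed convex hull of C as n → ∞. -/
open Metric Filter Topology Pointwise

variable {E : Type*} [NormedAddCommGroup E] [NormedSpace ℝ E] [CompleteSpace E]

/-!
The average `C[n]` lies in `convexHull ℝ C` because `n`-fold sums and dilation by `n` agree on a
convex set, so the excess vanishes. For the other half, the set of points whose `n`-fold multiples
stay within bounded distance of `n • C`, uniformly in `n`, contains `C`. It is also convex: given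
weights `a + b = 1`, take `⌊a n⌋` summands near one point and the remaining ones near the other, at
the cost of an error bounded by the distance between the two points. So it contains the convex hull,
whose points are therefore at distance `O(1 / n)` from `C[n]`. Distance functions being 1-Lipschitz,
convergence to zero passes to the closure.
-/

section ConvexSums

variable {𝕜 F : Type*} [Field 𝕜] [LinearOrder 𝕜] [IsStrictOrderedRing 𝕜]
  [AddCommGroup F] [Module 𝕜 F]

theorem convex_nsmul_eq_natCast_smul {s : Set F} (hs : Convex 𝕜 s) (hne : s.Nonempty) (n : ℕ) :
    n • s = (n : 𝕜) • s := by
  induction n with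
  | zero => rw [zero_nsmul, Nat.cast_zero, Set.zero_smul_set hne]
  | succ n ih =>
    rw [succ_nsmul, ih, Nat.cast_succ, hs.add_smul n.cast_nonneg zero_le_one, one_smul]

end ConvexSums

section MinkowskiAverage

variable {F : Type*} [AddCommGroup F] [Module ℝ F] {C : Set F} {n : ℕ}

/-- The average `C[n] = (C + ⋯ + C) / n` of `n` copies of `C`. The index is the number of summands,
and `C[0]` takes the irrelevant value `{0}`. -/
def minkowskiAverage (C : Set F) (n : ℕ) : Set F := (n : ℝ)⁻¹ • (n • C)

theorem minkowskiAverage_subset_convexHull (hC : C.Nonempty) (hn : n ≠ 0) :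
    minkowskiAverage C n ⊆ convexHull ℝ C :=
  calc (n : ℝ)⁻¹ • (n • C)
      ⊆ (n : ℝ)⁻¹ • (n • convexHull ℝ C) :=
        Set.smul_set_mono (Set.nsmul_subset_nsmul_left (subset_convexHull ℝ C))
    _ = (n : ℝ)⁻¹ • ((n : ℝ) • convexHull ℝ C) := by
        rw [convex_nsmul_eq_natCast_smul (convex_convexHull ℝ C) hC.convexHull]
    _ = convexHull ℝ C := inv_smul_smul₀ (Nat.cast_ne_zero.2 hn) _

theorem minkowskiAverage_nonempty (hC : C.Nonempty) (n : ℕ) : (minkowskiAverage C n).Nonempty :=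
  hC.nsmul.smul_set

end MinkowskiAverage

section NearMultiples

variable {F : Type*} [SeminormedAddCommGroup F] {C : Set F}

/-- The points `z` whose multiples `n • z` stay within bounded distance of the `n`-fold Minkowski
sums `n • C`, uniformly in `n`. -/
def nearMultiples (C : Set F) : Set F := {z | ∃ M : ℝ, ∀ n : ℕ, ∃ y ∈ n • C, dist (n • z) y ≤ M}

theorem subset_nearMultiples (C : Set F) : C ⊆ nearMultiples C := fun x hx =>
  ⟨0, fun n => ⟨n • x, Set.nsmul_mem_nsmul hx, (dist_self _).le⟩⟩

variable [NormedSpace ℝ F]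

theorem exists_add_eq_dist_nsmul_convexCombination_le {a b : ℝ} (ha : 0 ≤ a) (hb : 0 ≤ b)
    (hab : a + b = 1) (x y : F) (n : ℕ) :
    ∃ p q : ℕ, p + q = n ∧ dist (n • (a • x + b • y)) (p • x + q • y) ≤ dist x y := by
  have hp : (⌊a * n⌋₊ : ℝ) ≤ a * n := Nat.floor_le (by positivity)
  have hp' : a * n < ⌊a * n⌋₊ + 1 := Nat.lt_floor_add_one _
  obtain ⟨q, hq⟩ : ∃ q, n = ⌊a * n⌋₊ + q :=
    Nat.exists_eq_add_of_le <| Nat.floor_le_of_le <|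
      mul_le_of_le_one_left n.cast_nonneg (by linarith)
  refine ⟨⌊a * n⌋₊, q, hq.symm, ?_⟩
  set p := ⌊a * n⌋₊
  have hqn : (q : ℝ) = n - p := by rw [hq]; push_cast; ring
  have hsplit : n • (a • x + b • y) - (p • x + q • y) = (a * n - p) • (x - y) := by
    simp only [← Nat.cast_smul_eq_nsmul ℝ, hqn, eq_sub_of_add_eq' hab]
    module
  rw [dist_eq_norm, hsplit, norm_smul, dist_eq_norm]
  refine mul_le_of_le_one_left (norm_nonneg _) ?_
  rw [Real.norm_of_nonneg (sub_nonneg.2 hp)]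
  linarith

theorem convex_nearMultiples (C : Set F) : Convex ℝ (nearMultiples C) := by
  rintro x ⟨M, hM⟩ y ⟨N, hN⟩ a b ha hb hab
  refine ⟨dist x y + (M + N), fun n => ?_⟩
  obtain ⟨p, q, rfl, hpq⟩ := exists_add_eq_dist_nsmul_convexCombination_le ha hb hab x y n
  obtain ⟨u, hu, hxu⟩ := hM p
  obtain ⟨v, hv, hyv⟩ := hN q
  refine ⟨u + v, add_nsmul C p q ▸ Set.add_mem_add hu hv, ?_⟩
  calc dist ((p + q) • (a • x + b • y)) (u + v)
      ≤ dist ((p + q) • (a • x + b • y)) (p • x + q • y) + dist (p • x + q • y) (u + v) :=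
        dist_triangle _ _ _
    _ ≤ dist x y + (M + N) := by
        gcongr
        exact dist_add_add_le_of_le hxu hyv

theorem convexHull_subset_nearMultiples (C : Set F) : convexHull ℝ C ⊆ nearMultiples C :=
  convexHull_min (subset_nearMultiples C) (convex_nearMultiples C)

theorem exists_infDist_minkowskiAverage_le {z : F} (hz : z ∈ nearMultiples C) :
    ∃ M : ℝ, ∀ n : ℕ, n ≠ 0 → infDist z (minkowskiAverage C n) ≤ M / n := by
  obtain ⟨M, hM⟩ := hz
  refine ⟨M, fun n hn => ?_⟩
  obtain ⟨y, hy, hzy⟩ := hM n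
  have hn₀ : (n : ℝ) ≠ 0 := Nat.cast_ne_zero.2 hn
  calc infDist z (minkowskiAverage C n)
      ≤ dist z ((n : ℝ)⁻¹ • y) := infDist_le_dist_of_mem (Set.smul_mem_smul_set hy)
    _ = dist ((n : ℝ)⁻¹ • (n • z)) ((n : ℝ)⁻¹ • y) := by
        rw [← Nat.cast_smul_eq_nsmul ℝ n z, inv_smul_smul₀ hn₀]
    _ = dist (n • z) y / n := by
        rw [dist_smul₀, norm_inv, Real.norm_natCast, inv_mul_eq_div]
    _ ≤ M / n := by gcongr

theorem tendsto_infDist_minkowskiAverage {z : F} (hz : z ∈ convexHull ℝ C) :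
    Tendsto (fun n => infDist z (minkowskiAverage C n)) atTop (𝓝 0) := by
  obtain ⟨M, hM⟩ := exists_infDist_minkowskiAverage_le (convexHull_subset_nearMultiples C hz)
  refine squeeze_zero' (.of_forall fun _ => infDist_nonneg) ?_
    (tendsto_const_div_atTop_nhds_zero_nat M)
  filter_upwards [eventually_ne_atTop 0] with n hn using hM n hn

end NearMultiples

section FisherConvergence

theorem isClosed_setOfPred_tendsto_infDist_zero {ι α : Type*} [PseudoMetricSpace α] (l : Filter ι)
    (X : ι → Set α) : IsClosed {z | Tendsto (fun i => infDist z (X i)) l (𝓝 0)} :=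
  (LipschitzWith.uniformEquicontinuous (fun i z => infDist z (X i)) 1
    fun i => lipschitz_infDist_pt (X i)).equicontinuous.isClosed_setOfPred_tendsto
      continuous_const

variable {F : Type*} [NormedAddCommGroup F]

theorem excess_eq_zero_of_subset {A B : Set F} (hA : A.Nonempty) (hAB : A ⊆ B) :
    excess A B = 0 := by
  have himage : (fun a => infDist a B) '' A = {0} := by
    rw [Set.image_congr fun a ha => infDist_zero_of_mem (hAB ha), hA.image_const]
  rw [excess, himage, csSup_singleton]

theorem fisherConv_closure_of_subset {X : ℕ → Set F} {L : Set F} (hne : ∀ n, (X n).Nonempty)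
    (hsub : ∀ n, X n ⊆ L) (hlim : ∀ z ∈ L, Tendsto (fun n => infDist z (X n)) atTop (𝓝 0)) :
    FisherConv (fun n => closure (X n)) (closure L) := by
  refine ⟨?_, fun z hz => ?_⟩
  · simp only [excess_eq_zero_of_subset (hne _).closure (closure_mono (hsub _)), tendsto_const_nhds]
  · simp only [infDist_closure]
    exact closure_minimal hlim (isClosed_setOfPred_tendsto_infDist_zero atTop X) hz

theorem fisherConv_average_self_general [NormedSpace ℝ F] (C : Set F) (hC : C.Nonempty) :
    FisherConv (fun n => closure ((((n : ℝ) + 1))⁻¹ • ((n + 1) • C)))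
      (closure (convexHull ℝ C)) := by
  have haverage (n : ℕ) : ((n : ℝ) + 1)⁻¹ • ((n + 1) • C) = minkowskiAverage C (n + 1) := by
    rw [minkowskiAverage, Nat.cast_succ]
  simp only [haverage]
  exact fisherConv_closure_of_subset
    (fun n => minkowskiAverage_nonempty hC (n + 1))
    (fun n => minkowskiAverage_subset_convexHull hC n.succ_ne_zero)
    (fun _ hz => (tendsto_infDist_minkowskiAverage hz).comp (tendsto_add_atTop_nat 1))

end FisherConvergence

/-- Proposition 4.1: for `C ∈ ℭ(E)`, the closures of the sets
`C[n] = (C + ⋯ + C)/n` (`n`-fold Minkowski sum scaled by `1/n`) Fisher-converge to the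
closed convex hull of `C`.  Here `(n+1) • C` is the `(n+1)`-fold Minkowski sum. -/
theorem fisherConv_average_self (C : Set E)
    (hCne : C.Nonempty) (hCcl : IsClosed C) (hCbd : Bornology.IsBounded C) :
    FisherConv (fun n => closure ((((n : ℝ) + 1))⁻¹ • ((n + 1) • C)))
      (closure (convexHull ℝ C)) :=
  fisherConv_average_self_general C hCne
end

section
/- Let E be a real Banach space and let A, C, Z be nonempty subsets of E with C convex and Z bounded. If the closure of the Minkowski sum A + Z is contained in the closure of C + Z, then A is contained in the closure of C. -/
open Pointwise

/-!
Rådström's iteration argument: adding `A` repeatedly to `A + Z ⊆ closure (C + Z)` and using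
`n • C + C = (n + 1) • C`, which is convexity of `C`, gives `n • A + Z ⊆ closure (n • C + Z)`,
that is, `A + n⁻¹ • Z ⊆ closure (C + n⁻¹ • Z)`. Translate `Z` so that it contains `0`;
boundedness makes `n⁻¹ • Z` shrink to `0`, so every point of `A` lies in the closure of `C`.
-/

open Filter Topology

theorem mem_closure_of_forall_mem_closure_add {G : Type*} [TopologicalSpace G] [AddCommGroup G]
    [IsTopologicalAddGroup G] {s : Set G} {a : G}
    (h : ∀ V ∈ 𝓝 (0 : G), a ∈ closure (s + V)) : a ∈ closure s := by
  rw [mem_closure_iff_nhds_zero]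
  intro U hU
  obtain ⟨V, hV, hVU⟩ := exists_nhds_half_neg hU
  obtain ⟨_, ⟨c, hc, v, hv, rfl⟩, hcv⟩ := mem_closure_iff_nhds_zero.1 (h V hV) V hV
  refine ⟨c, hc, ?_⟩
  have hdiff : c + v - a - v = c - a := by abel
  exact hdiff ▸ hVU _ hcv _ hv

section OrderedField

variable {𝕜 E : Type*} [Field 𝕜] [LinearOrder 𝕜] [IsStrictOrderedRing 𝕜] [AddCommGroup E]
  [Module 𝕜 E] [TopologicalSpace E] {A C Z : Set E}

theorem natCast_smul_add_subset_closure_add [ContinuousConstVAdd E E] (hC : Convex 𝕜 C)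
    (h : A + Z ⊆ closure (C + Z)) {n : ℕ} (hn : 1 ≤ n) :
    (n : 𝕜) • A + Z ⊆ closure ((n : 𝕜) • C + Z) := by
  induction n, hn using Nat.le_induction with
  | base => simpa only [Nat.cast_one, one_smul] using h
  | succ n _ ih =>
    have hC_succ : ((n + 1 : ℕ) : 𝕜) • C = (n : 𝕜) • C + C := by
      rw [Nat.cast_succ, hC.add_smul n.cast_nonneg zero_le_one, one_smul]
    have hA_succ : ((n + 1 : ℕ) : 𝕜) • A ⊆ (n : 𝕜) • A + A := by
      simpa only [Nat.cast_succ, one_smul] using Set.add_smul_subset (n : 𝕜) 1 A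
    calc ((n + 1 : ℕ) : 𝕜) • A + Z
        ⊆ (n : 𝕜) • A + A + Z := Set.add_subset_add_right hA_succ
      _ = (n : 𝕜) • A + (A + Z) := add_assoc _ _ _
      _ ⊆ (n : 𝕜) • A + closure (C + Z) := Set.add_subset_add_left h
      _ ⊆ closure ((n : 𝕜) • A + (C + Z)) := set_vadd_closure_subset _ _
      _ = closure (C + ((n : 𝕜) • A + Z)) := by rw [add_left_comm]
      _ ⊆ closure (C + closure ((n : 𝕜) • C + Z)) := closure_mono (Set.add_subset_add_left ih)
      _ ⊆ closure (C + ((n : 𝕜) • C + Z)) :=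
        closure_minimal (set_vadd_closure_subset _ _) isClosed_closure
      _ = closure (((n + 1 : ℕ) : 𝕜) • C + Z) := by rw [hC_succ, add_left_comm, add_assoc]

theorem add_inv_natCast_smul_subset_closure_add [ContinuousConstVAdd E E] [ContinuousConstSMul 𝕜 E]
    (hC : Convex 𝕜 C) (h : A + Z ⊆ closure (C + Z)) {n : ℕ} (hn : 1 ≤ n) :
    A + (n : 𝕜)⁻¹ • Z ⊆ closure (C + (n : 𝕜)⁻¹ • Z) := by
  have hn₀ : (n : 𝕜) ≠ 0 := Nat.cast_ne_zero.2 (Nat.one_le_iff_ne_zero.1 hn)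
  calc A + (n : 𝕜)⁻¹ • Z
      = (n : 𝕜)⁻¹ • ((n : 𝕜) • A + Z) := by rw [smul_add, inv_smul_smul₀ hn₀]
    _ ⊆ (n : 𝕜)⁻¹ • closure ((n : 𝕜) • C + Z) :=
      Set.smul_set_mono (natCast_smul_add_subset_closure_add hC h hn)
    _ ⊆ closure ((n : 𝕜)⁻¹ • ((n : 𝕜) • C + Z)) := smul_closure_subset _ _
    _ = closure (C + (n : 𝕜)⁻¹ • Z) := by rw [smul_add, inv_smul_smul₀ hn₀]

end OrderedField

section TopologicalVectorSpace

variable {E : Type*} [AddCommGroup E] [Module ℝ E] [TopologicalSpace E]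
  [IsTopologicalAddGroup E] [ContinuousSMul ℝ E] {A C Z : Set E}

theorem subset_closure_of_add_subset_closure_add_of_zero_mem (hC : Convex ℝ C)
    (hZ : Bornology.IsVonNBounded ℝ Z) (hZ₀ : 0 ∈ Z) (h : A + Z ⊆ closure (C + Z)) :
    A ⊆ closure C := by
  intro a ha
  refine mem_closure_of_forall_mem_closure_add fun V hV ↦ ?_
  have hshrink : Tendsto (fun n : ℕ ↦ (n : ℝ)⁻¹ • Z) atTop (𝓝 0).smallSets :=
    hZ.tendsto_smallSets_nhds.comp tendsto_inv_atTop_nhds_zero_nat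
  obtain ⟨n, hnV, hn⟩ :=
    ((tendsto_smallSets_iff.1 hshrink V hV).and (eventually_ge_atTop 1)).exists
  have ha_mem : a ∈ A + (n : ℝ)⁻¹ • Z :=
    ⟨a, ha, 0, Set.zero_mem_smul_set hZ₀, add_zero a⟩
  exact closure_mono (Set.add_subset_add_left hnV)
    (add_inv_natCast_smul_subset_closure_add hC h hn ha_mem)

theorem radstrom_cancellation_general (hC : Convex ℝ C) (hZ : Z.Nonempty)
    (hZbd : Bornology.IsVonNBounded ℝ Z) (h : A + Z ⊆ closure (C + Z)) : A ⊆ closure C := by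
  obtain ⟨z, hz⟩ := hZ
  have htranslate : A + (-z +ᵥ Z) ⊆ closure (C + (-z +ᵥ Z)) := by
    simpa only [add_vadd_comm, closure_vadd] using Set.vadd_set_mono (a := -z) h
  exact subset_closure_of_add_subset_closure_add_of_zero_mem hC (hZbd.vadd (-z))
    ⟨z, hz, neg_add_cancel z⟩ htranslate

end TopologicalVectorSpace

/-- Proposition 6.2 (Rådström cancellation): if `A, C, Z` are nonempty subsets of a real
Banach space with `C` convex and `Z` bounded, and `closure (A + Z) ⊆ closure (C + Z)`,
then `A ⊆ closure C`. -/
theorem radstrom_cancellation {E : Type*} [NormedAddCommGroup E] [NormedSpace ℝ E]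
    [CompleteSpace E]
    (A C Z : Set E) (hA : A.Nonempty) (hC : C.Nonempty) (hZ : Z.Nonempty)
    (hCcv : Convex ℝ C) (hZbd : Bornology.IsBounded Z)
    (h : closure (A + Z) ⊆ closure (C + Z)) :
    A ⊆ closure C :=
  radstrom_cancellation_general hCcv hZ (NormedSpace.isVonNBounded_of_isBounded ℝ hZbd)
    (subset_closure.trans h)
end

section
/- (Rådström embedding.) Let E be a real Banach space. There exist a real Banach space F and a map J : ℭ_c(E) → F such that: (i) J(λX +̇ μY) = λ J(X) + μ J(Y) for every X, Y ∈ ℭ_c(E) and λ, μ ≥ 0, where X +̇ Y denotes the closure of the Minkowski sum; (ii) ‖J(X) − J(Y)‖ = h(X, Y) for every X, Y ∈ ℭ_c(E); (iii) the image J(ℭ_c(E)) is a convex cone in F which is complete (closed) under the metric induced by the norm of F. -/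
open Metric Pointwise

universe u

variable {E : Type u} [NormedAddCommGroup E] [NormedSpace ℝ E] [CompleteSpace E]

/-- Membership in `ℭ_c(E)`: nonempty, closed, bounded and convex. -/
def IsCBC (A : Set E) : Prop :=
  A.Nonempty ∧ IsClosed A ∧ Bornology.IsBounded A ∧ Convex ℝ A

/-!
A set `A` is encoded by its support function `f ↦ sup_{x ∈ A} f x`, restricted to the unit ball
of the dual and regarded as a point of `ℓ^∞`. Support functions turn Minkowski sums into sums. By
Hahn–Banach, the distance from a point `x` to a convex set `B` is attained by a functional of norm
at most one, so the sup distance between two support functions is the Hausdorff distance of the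
sets. The image is then complete because nonempty closed bounded convex sets form a closed subset
of the complete Hausdorff space of all closed sets.
-/

open Bornology TopologicalSpace
open scoped lp

theorem hdist_eq_hausdorffDist {V : Type*} [NormedAddCommGroup V] {A B : Set V}
    (hAB : hausdorffEDist A B ≠ ⊤) : hdist A B = hausdorffDist A B := by
  have infDist_le_left : ∀ a ∈ A, infDist a B ≤ hausdorffDist A B := fun _ ha =>
    infDist_le_hausdorffDist_of_mem ha hAB
  have infDist_le_right : ∀ b ∈ B, infDist b A ≤ hausdorffDist A B := by
    rw [hausdorffEDist_comm] at hAB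
    rw [hausdorffDist_comm]
    exact fun _ hb => infDist_le_hausdorffDist_of_mem hb hAB
  apply le_antisymm
  · exact max_le (Real.sSup_le (Set.forall_mem_image.2 infDist_le_left) hausdorffDist_nonneg)
      (Real.sSup_le (Set.forall_mem_image.2 infDist_le_right) hausdorffDist_nonneg)
  · have excess_nonneg : 0 ≤ excess A B :=
      Real.sSup_nonneg (Set.forall_mem_image.2 fun _ _ => infDist_nonneg)
    refine hausdorffDist_le_of_infDist (excess_nonneg.trans (le_max_left _ _))
      (fun a ha => le_max_of_le_left ?_) (fun b hb => le_max_of_le_right ?_)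
    · exact le_csSup ⟨_, Set.forall_mem_image.2 infDist_le_left⟩ (Set.mem_image_of_mem _ ha)
    · exact le_csSup ⟨_, Set.forall_mem_image.2 infDist_le_right⟩ (Set.mem_image_of_mem _ hb)

section SupportFunction

variable {V : Type*} [SeminormedAddCommGroup V] [NormedSpace ℝ V] {A B : Set V}

/-- The support function `f ↦ sup_{x ∈ A} f x` of a set `A`, on the continuous dual. As a real
supremum it is meaningful for `A` nonempty and bounded; it is `0` for `A = ∅`. -/
noncomputable def supportFunction (A : Set V) (f : StrongDual ℝ V) : ℝ := sSup (f '' A)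

theorem isLUB_supportFunction (hA : A.Nonempty) (hAb : IsBounded A) (f : StrongDual ℝ V) :
    IsLUB (f '' A) (supportFunction A f) :=
  isLUB_csSup (hA.image f) (f.lipschitz.isBounded_image hAb).bddAbove

theorem apply_le_supportFunction (hA : IsBounded A) (f : StrongDual ℝ V) {x : V} (hx : x ∈ A) :
    f x ≤ supportFunction A f :=
  (isLUB_supportFunction ⟨x, hx⟩ hA f).1 (Set.mem_image_of_mem f hx)

theorem supportFunction_smul {c : ℝ} (hc : 0 ≤ c) (A : Set V) (f : StrongDual ℝ V) :
    supportFunction (c • A) f = c * supportFunction A f := by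
  rw [supportFunction, image_smul_set, Real.sSup_smul_of_nonneg hc, smul_eq_mul, supportFunction]

theorem supportFunction_add (hA : A.Nonempty) (hAb : IsBounded A) (hB : B.Nonempty)
    (hBb : IsBounded B) (f : StrongDual ℝ V) :
    supportFunction (A + B) f = supportFunction A f + supportFunction B f := by
  have hsum := (isLUB_supportFunction hA hAb f).add (isLUB_supportFunction hB hBb f)
  rw [← Set.image_add] at hsum
  exact hsum.csSup_eq ((hA.add hB).image f)

theorem supportFunction_closure (hA : A.Nonempty) (hAb : IsBounded A) (f : StrongDual ℝ V) :
    supportFunction (closure A) f = supportFunction A f :=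
  ((isLUB_iff_of_subset_of_subset_closure (Set.image_mono subset_closure)
    (image_closure_subset_closure_image f.continuous)).1
      (isLUB_supportFunction hA hAb f)).csSup_eq (hA.closure.image f)

theorem apply_sub_supportFunction_le (hB : B.Nonempty) (hBb : IsBounded B)
    (f : StrongDual ℝ V) (x : V) : f x - supportFunction B f ≤ ‖f‖ * infDist x B := by
  have := hB.to_subtype
  rw [infDist_eq_iInf, Real.mul_iInf_of_nonneg (norm_nonneg f)]
  refine le_ciInf fun ⟨y, hy⟩ => ?_
  calc f x - supportFunction B f ≤ f x - f y := by
        gcongr; exact apply_le_supportFunction hBb f hy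
    _ = f (x - y) := (map_sub f x y).symm
    _ ≤ ‖f‖ * ‖x - y‖ := (le_abs_self _).trans (f.le_opNorm _)
    _ = ‖f‖ * dist x y := by rw [dist_eq_norm]

theorem supportFunction_sub_le (hA : A.Nonempty) (hAb : IsBounded A) (hB : B.Nonempty)
    (hBb : IsBounded B) (f : StrongDual ℝ V) :
    supportFunction A f - supportFunction B f ≤ ‖f‖ * hausdorffDist A B := by
  have hfin := hausdorffEDist_ne_top_of_nonempty_of_bounded hA hB hAb hBb
  rw [sub_le_iff_le_add, isLUB_le_iff (isLUB_supportFunction hA hAb f)]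
  rintro _ ⟨x, hx, rfl⟩
  rw [← sub_le_iff_le_add]
  calc f x - supportFunction B f ≤ ‖f‖ * infDist x B := apply_sub_supportFunction_le hB hBb f x
    _ ≤ ‖f‖ * hausdorffDist A B := by gcongr; exact infDist_le_hausdorffDist_of_mem hx hfin

theorem abs_supportFunction_sub_le (hA : A.Nonempty) (hAb : IsBounded A) (hB : B.Nonempty)
    (hBb : IsBounded B) (f : StrongDual ℝ V) :
    |supportFunction A f - supportFunction B f| ≤ ‖f‖ * hausdorffDist A B :=
  abs_sub_le_iff.2 ⟨supportFunction_sub_le hA hAb hB hBb f,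
    hausdorffDist_comm (s := A) ▸ supportFunction_sub_le hB hBb hA hAb f⟩

theorem abs_supportFunction_le (hA : A.Nonempty) (hAb : IsBounded A) (f : StrongDual ℝ V) :
    |supportFunction A f| ≤ ‖f‖ * hausdorffDist A {0} := by
  simpa [supportFunction] using
    abs_supportFunction_sub_le hA hAb (Set.singleton_nonempty 0) isBounded_singleton f

theorem memℓp_supportFunction (hA : A.Nonempty) (hAb : IsBounded A) :
    Memℓp (fun f : closedBall (0 : StrongDual ℝ V) 1 => supportFunction A f) ⊤ := by
  refine memℓp_infty ⟨hausdorffDist A {0}, Set.forall_mem_range.2 fun f => ?_⟩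
  calc ‖supportFunction A (f : StrongDual ℝ V)‖ ≤ ‖(f : StrongDual ℝ V)‖ * hausdorffDist A {0} :=
        abs_supportFunction_le hA hAb f
    _ ≤ hausdorffDist A {0} :=
        mul_le_of_le_one_left hausdorffDist_nonneg (mem_closedBall_zero_iff.1 f.2)

open Classical in
/-- The Rådström map, sending a nonempty bounded set to its support function on the closed unit
ball of the dual. Every other set is sent to the junk value `0`. -/
noncomputable def supportMap (A : Set V) : ℓ^⊤(closedBall (0 : StrongDual ℝ V) 1, ℝ) :=
  if h : A.Nonempty ∧ IsBounded A then ⟨_, memℓp_supportFunction h.1 h.2⟩ else 0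

theorem supportMap_apply (hA : A.Nonempty) (hAb : IsBounded A)
    (f : closedBall (0 : StrongDual ℝ V) 1) : supportMap A f = supportFunction A f := by
  rw [supportMap, dif_pos ⟨hA, hAb⟩]

theorem supportMap_closure_smul_add_smul (hA : A.Nonempty) (hAb : IsBounded A) (hB : B.Nonempty)
    (hBb : IsBounded B) {a b : ℝ} (ha : 0 ≤ a) (hb : 0 ≤ b) :
    supportMap (closure (a • A + b • B)) = a • supportMap A + b • supportMap B := by
  have hne : (a • A + b • B).Nonempty := hA.smul_set.add hB.smul_set
  have hbdd : IsBounded (a • A + b • B) := (hAb.smul₀ a).add (hBb.smul₀ b)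
  ext f
  calc supportMap (closure (a • A + b • B)) f
      = supportFunction (a • A + b • B) f := by
        rw [supportMap_apply hne.closure hbdd.closure, supportFunction_closure hne hbdd]
    _ = a * supportFunction A f + b * supportFunction B f := by
        rw [supportFunction_add hA.smul_set (hAb.smul₀ a) hB.smul_set (hBb.smul₀ b),
          supportFunction_smul ha, supportFunction_smul hb]
    _ = a * supportMap A f + b * supportMap B f := by
        rw [supportMap_apply hA hAb, supportMap_apply hB hBb]

end SupportFunction

section Duality

variable {V : Type*} [NormedAddCommGroup V] [NormedSpace ℝ V] {A B : Set V}

theorem mul_norm_le_of_forall_mem_ball {f : StrongDual ℝ V} {x : V} {r u : ℝ} (hr : 0 < r)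
    (hf : ∀ z ∈ ball x r, f z ≤ u) : r * ‖f‖ ≤ u - f x := by
  have hclosed : ∀ z ∈ closedBall x r, f z ≤ u := by
    rw [← closure_ball x hr.ne']
    exact fun z hz => closure_minimal hf (isClosed_le f.continuous continuous_const) hz
  rw [mul_comm, ← le_div_iff₀ hr]
  refine ContinuousLinearMap.opNorm_bound_of_ball_bound hr _ f fun z hz => abs_le'.2 ?_
  rw [mem_closedBall_zero_iff] at hz
  have hadd := hclosed (x + z) (by simpa [dist_eq_norm] using hz)
  have hsub := hclosed (x - z) (by simpa [dist_eq_norm] using hz)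
  rw [map_add] at hadd
  rw [map_sub] at hsub
  constructor <;> linarith

theorem exists_norm_le_one_forall_apply_add_infDist_le (hB : Convex ℝ B) (x : V) :
    ∃ f : StrongDual ℝ V, ‖f‖ ≤ 1 ∧ ∀ y ∈ B, f y + infDist x B ≤ f x := by
  obtain hd | hd := (infDist_nonneg (x := x) (s := B)).eq_or_lt
  · exact ⟨0, by simp, by simp [← hd]⟩
  have hne : B.Nonempty := by
    by_contra! hempty
    simp [hempty] at hd
  obtain ⟨f, u, hball, hBu⟩ :=
    geometric_hahn_banach_open (convex_ball x _) isOpen_ball hB disjoint_ball_infDist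
  have hnorm : infDist x B * ‖f‖ ≤ u - f x :=
    mul_norm_le_of_forall_mem_ball hd fun z hz => (hball z hz).le
  have hf : 0 < ‖f‖ := by
    rw [norm_pos_iff]
    rintro rfl
    obtain ⟨y, hy⟩ := hne
    exact ((hball x (mem_ball_self hd)).trans_le (hBu y hy)).false
  refine ⟨-(‖f‖⁻¹ • f), by simp [norm_smul, hf.ne'], fun y hy => ?_⟩
  have hgap : infDist x B ≤ ‖f‖⁻¹ * (f y - f x) := by
    rw [inv_mul_eq_div, le_div_iff₀ hf]
    linarith [hBu y hy]
  simp only [neg_apply, smul_apply, smul_eq_mul]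
  linarith

theorem infDist_le_of_forall_supportFunction_sub_le (hA : IsBounded A) (hB : B.Nonempty)
    (hBb : IsBounded B) (hBc : Convex ℝ B) {r : ℝ}
    (h : ∀ f : StrongDual ℝ V, ‖f‖ ≤ 1 → supportFunction A f - supportFunction B f ≤ r)
    {x : V} (hx : x ∈ A) : infDist x B ≤ r := by
  obtain ⟨f, hf, hfB⟩ := exists_norm_le_one_forall_apply_add_infDist_le hBc x
  have hsup : supportFunction B f ≤ f x - infDist x B := by
    rw [isLUB_le_iff (isLUB_supportFunction hB hBb f)]
    rintro _ ⟨y, hy, rfl⟩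
    exact le_sub_iff_add_le.2 (hfB y hy)
  linarith [h f hf, apply_le_supportFunction hA f hx]

theorem norm_supportMap_sub (hA : A.Nonempty) (hAb : IsBounded A) (hAc : Convex ℝ A)
    (hB : B.Nonempty) (hBb : IsBounded B) (hBc : Convex ℝ B) :
    ‖supportMap A - supportMap B‖ = hausdorffDist A B := by
  have hcoord (f : closedBall (0 : StrongDual ℝ V) 1) :
      (supportMap A - supportMap B) f = supportFunction A f - supportFunction B f := by
    rw [lp.coeFn_sub, Pi.sub_apply, supportMap_apply hA hAb, supportMap_apply hB hBb]
  apply le_antisymm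
  · refine lp.norm_le_of_forall_le hausdorffDist_nonneg fun f => ?_
    calc ‖(supportMap A - supportMap B) f‖ ≤ ‖(f : StrongDual ℝ V)‖ * hausdorffDist A B := by
          rw [hcoord]; exact abs_supportFunction_sub_le hA hAb hB hBb f
      _ ≤ hausdorffDist A B :=
          mul_le_of_le_one_left hausdorffDist_nonneg (mem_closedBall_zero_iff.1 f.2)
  · have hle (f : StrongDual ℝ V) (hf : ‖f‖ ≤ 1) :
        |supportFunction A f - supportFunction B f| ≤ ‖supportMap A - supportMap B‖ :=
      hcoord ⟨f, mem_closedBall_zero_iff.2 hf⟩ ▸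
        lp.norm_apply_le_norm ENNReal.top_ne_zero (supportMap A - supportMap B) _
    refine hausdorffDist_le_of_infDist (norm_nonneg _) (fun a ha => ?_) (fun b hb => ?_)
    · exact infDist_le_of_forall_supportFunction_sub_le hAb hB hBb hBc
        (fun f hf => (abs_sub_le_iff.1 (hle f hf)).1) ha
    · exact infDist_le_of_forall_supportFunction_sub_le hBb hA hAb hAc
        (fun f hf => (abs_sub_le_iff.1 (hle f hf)).2) hb

theorem edist_supportMap (hA : A.Nonempty) (hAb : IsBounded A) (hAc : Convex ℝ A)
    (hB : B.Nonempty) (hBb : IsBounded B) (hBc : Convex ℝ B) :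
    edist (supportMap A) (supportMap B) = hausdorffEDist A B := by
  rw [edist_dist, dist_eq_norm, norm_supportMap_sub hA hAb hAc hB hBb hBc, hausdorffDist,
    ENNReal.ofReal_toReal (hausdorffEDist_ne_top_of_nonempty_of_bounded hA hB hAb hBb)]

end Duality

section ClosedBoundedConvex

theorem subset_thickening_of_hausdorffEDist_lt {α : Type*} [PseudoEMetricSpace α] {s t : Set α}
    {δ : ℝ} (h : hausdorffEDist s t < ENNReal.ofReal δ) : s ⊆ thickening δ t := fun _ hx =>
  mem_thickening_iff_infEDist_lt.2 ((infEDist_le_hausdorffEDist_of_mem hx).trans_lt h)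

theorem exists_mem_subset_thickening_of_mem_closure {α : Type*} [EMetricSpace α]
    {S : Set (Closeds α)} {L : Closeds α} (hL : L ∈ closure S) {δ : ℝ} (hδ : 0 < δ) :
    ∃ A ∈ S, (L : Set α) ⊆ thickening δ A ∧ (A : Set α) ⊆ thickening δ L := by
  obtain ⟨A, hA, hLA⟩ := EMetric.mem_closure_iff.1 hL _ (ENNReal.ofReal_pos.2 hδ)
  rw [Closeds.edist_eq] at hLA
  exact ⟨A, hA, subset_thickening_of_hausdorffEDist_lt hLA,
    subset_thickening_of_hausdorffEDist_lt (hausdorffEDist_comm (s := (L : Set α)) ▸ hLA)⟩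

theorem isClosed_setOfPred_nonempty_closeds {α : Type*} [EMetricSpace α] :
    IsClosed {L : Closeds α | (L : Set α).Nonempty} := by
  simpa only [Set.compl_singleton_eq, Closeds.coe_nonempty] using
    (Closeds.isClopen_singleton_bot (α := α)).compl.isClosed

theorem isClosed_setOfPred_isBounded_closeds {α : Type*} [MetricSpace α] :
    IsClosed {L : Closeds α | IsBounded (L : Set α)} := by
  refine isClosed_of_closure_subset fun L hL => ?_
  obtain ⟨A, hA, hLA, -⟩ := exists_mem_subset_thickening_of_mem_closure hL one_pos
  exact (IsBounded.thickening hA).subset hLA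

theorem isClosed_setOfPred_convex_closeds {V : Type*} [NormedAddCommGroup V] [NormedSpace ℝ V] :
    IsClosed {L : Closeds V | Convex ℝ (L : Set V)} := by
  refine isClosed_of_closure_subset fun L hL x hx y hy a b ha hb hab => ?_
  rw [← L.isClosed.closure_eq, closure_eq_iInter_thickening]
  refine Set.mem_iInter₂.2 fun δ hδ => ?_
  obtain ⟨A, hA, hLA, hAL⟩ := exists_mem_subset_thickening_of_mem_closure hL (half_pos hδ)
  have hmem : a • x + b • y ∈ thickening (δ / 2) (A : Set V) :=
    Convex.thickening hA _ (hLA hx) (hLA hy) ha hb hab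
  have hsub : thickening (δ / 2) (A : Set V) ⊆ thickening δ (L : Set V) := by
    calc thickening (δ / 2) (A : Set V) ⊆ thickening (δ / 2) (thickening (δ / 2) L) :=
          thickening_subset_of_subset _ hAL
      _ ⊆ thickening (δ / 2 + δ / 2) L := thickening_thickening_subset _ _ _
      _ = thickening δ L := by rw [add_halves]
  exact hsub hmem

variable {V : Type*} [NormedAddCommGroup V] [NormedSpace ℝ V]

theorem isCBC_closure_smul_add_smul {A B : Set V} (hA : IsCBC A) (hB : IsCBC B) (a b : ℝ) :
    IsCBC (closure (a • A + b • B)) := by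
  obtain ⟨hA, -, hAb, hAc⟩ := hA
  obtain ⟨hB, -, hBb, hBc⟩ := hB
  exact ⟨(hA.smul_set.add hB.smul_set).closure, isClosed_closure,
    ((hAb.smul₀ a).add (hBb.smul₀ b)).closure, ((hAc.smul a).add (hBc.smul b)).closure⟩

theorem isClosed_setOfPred_isCBC : IsClosed {L : Closeds V | IsCBC (L : Set V)} := by
  simpa only [IsCBC, Closeds.isClosed, true_and, Set.ofPred_and] using
    isClosed_setOfPred_nonempty_closeds.inter
      (isClosed_setOfPred_isBounded_closeds.inter isClosed_setOfPred_convex_closeds)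

theorem isComplete_image_supportMap [CompleteSpace V] :
    IsComplete (supportMap '' {A : Set V | IsCBC A}) := by
  let S : Set (Closeds V) := {L | IsCBC (L : Set V)}
  have : CompleteSpace S := isClosed_setOfPred_isCBC.isComplete.completeSpace_coe
  have hiso : Isometry fun L : S => supportMap (L : Set V) :=
    fun ⟨_, hL, _, hLb, hLc⟩ ⟨_, hM, _, hMb, hMc⟩ => edist_supportMap hL hLb hLc hM hMb hMc
  have himage :
      supportMap '' {A : Set V | IsCBC A} = Set.range fun L : S => supportMap (L : Set V) :=
    Set.Subset.antisymm (Set.image_subset_iff.2 fun A hA => ⟨⟨⟨A, hA.2.1⟩, hA⟩, rfl⟩)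
      (Set.range_subset_iff.2 fun L => Set.mem_image_of_mem _ L.2)
  rw [himage]
  exact hiso.isUniformInducing.isComplete_range

end ClosedBoundedConvex

/-- Proposition 6.4 (Rådström embedding): there exist a real Banach space `F` and a map
`J` defined on `ℭ_c(E)` such that (i) `J(λX +̇ μY) = λJ(X) + μJ(Y)` for `λ, μ ≥ 0`
(where `X +̇ Y` is the closure of the Minkowski sum); (ii) `‖J(X) − J(Y)‖ = h(X, Y)`;
(iii) the image of `ℭ_c(E)` under `J` is a convex cone in `F` (stable under addition
and multiplication by nonnegative scalars), complete under the metric induced by the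
norm of `F`. -/
theorem radstrom_embedding :
    ∃ (F : Type u) (_ : NormedAddCommGroup F) (_ : NormedSpace ℝ F)
      (_ : CompleteSpace F) (J : Set E → F),
      (∀ X Y : Set E, IsCBC X → IsCBC Y → ∀ lam mu : ℝ, 0 ≤ lam → 0 ≤ mu →
        J (closure (lam • X + mu • Y)) = lam • J X + mu • J Y) ∧
      (∀ X Y : Set E, IsCBC X → IsCBC Y → ‖J X - J Y‖ = hdist X Y) ∧
      (∀ u v : F, u ∈ J '' {A | IsCBC A} → v ∈ J '' {A | IsCBC A} →
        u + v ∈ J '' {A | IsCBC A}) ∧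
      (∀ c : ℝ, 0 ≤ c → ∀ u ∈ J '' {A | IsCBC A}, c • u ∈ J '' {A | IsCBC A}) ∧
      IsComplete (J '' {A | IsCBC A}) := by
  have map_add (X Y : Set E) (hX : IsCBC X) (hY : IsCBC Y) (a b : ℝ) (ha : 0 ≤ a) (hb : 0 ≤ b) :
      supportMap (closure (a • X + b • Y)) = a • supportMap X + b • supportMap Y :=
    supportMap_closure_smul_add_smul hX.1 hX.2.2.1 hY.1 hY.2.2.1 ha hb
  refine ⟨_, inferInstance, inferInstance, inferInstance, supportMap, map_add, ?isometry, ?add,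
    ?smul, isComplete_image_supportMap⟩
  case isometry =>
    rintro X Y ⟨hX, -, hXb, hXc⟩ ⟨hY, -, hYb, hYc⟩
    rw [norm_supportMap_sub hX hXb hXc hY hYb hYc, hdist_eq_hausdorffDist
      (hausdorffEDist_ne_top_of_nonempty_of_bounded hX hY hXb hYb)]
  case add =>
    rintro _ _ ⟨X, hX, rfl⟩ ⟨Y, hY, rfl⟩
    refine ⟨_, isCBC_closure_smul_add_smul hX hY 1 1, ?_⟩
    rw [map_add X Y hX hY 1 1 zero_le_one zero_le_one, one_smul, one_smul]
  case smul =>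
    rintro c hc _ ⟨X, hX, rfl⟩
    refine ⟨_, isCBC_closure_smul_add_smul hX hX c 0, ?_⟩
    rw [map_add X X hX hX c 0 hc le_rfl, zero_smul, add_zero]
end
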